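/- Let H be a real Banach space, F : H → H, and S : ℝ × H → H a jointly Fréchet differentiable self-adjoint map, i.e. S(−t, S(t,u)) = u for all t and u. Define the symmetrized defect Ds(t,u) = ∂₁S(t,u) − (1/2)(F(S(t,u)) + D₂S(t,u)(F(u))). Then for all t ∈ ℝ and u₀ ∈ H the 'critical term' vanishes exactly: D₂S(−t, S(t,u₀))(Ds(t,u₀)) − Ds(−t, S(t,u₀)) = 0. -/

import Mathlib

/-!
Set `v = S(t,u)`, so that `S(-t,v) = u`. Differentiating `S(-τ, S(τ,u)) = u` in `τ` gives
`D₂S(-t,v)(∂₁S(t,u)) = ∂₁S(-t,v)`, and differentiating `S(-t, S(t,w)) = w` in `w` gives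
`D₂S(-t,v) ∘ D₂S(t,u) = id`. Hence `D₂S(-t,v)` carries `∂₁S(t,u)` to `∂₁S(-t,v)` and exchanges the
roles of the two vectors in `F(v) + D₂S(t,u)(F(u))`, which becomes `D₂S(-t,v)(F(v)) + F(S(-t,v))`.
-/

open Filter Function Topology

section Derivatives

variable {𝕜 E G H : Type*} [NontriviallyNormedField 𝕜] [NormedAddCommGroup E] [NormedSpace 𝕜 E]
  [NormedAddCommGroup G] [NormedSpace 𝕜 G] [NormedAddCommGroup H] [NormedSpace 𝕜 H]

theorem hasFDerivAt_uncurry_coprod_fderiv {f : E → G → H} {x : E} {y : G}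
    (hf : DifferentiableAt 𝕜 (uncurry f) (x, y)) :
    HasFDerivAt (uncurry f) ((fderiv 𝕜 (f · y) x).coprod (fderiv 𝕜 (f x) y)) (x, y) := by
  have h₁ : fderiv 𝕜 (f · y) x = fderiv 𝕜 (uncurry f) (x, y) ∘L .inl 𝕜 E G :=
    HasFDerivAt.fderiv (hf.hasFDerivAt.comp (f := (·, y)) x (hasFDerivAt_prodMk_left x y))
  have h₂ : fderiv 𝕜 (f x) y = fderiv 𝕜 (uncurry f) (x, y) ∘L .inr 𝕜 E G :=
    HasFDerivAt.fderiv (hf.hasFDerivAt.comp (f := (x, ·)) y (hasFDerivAt_prodMk_right x y))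
  rw [h₁, h₂, ContinuousLinearMap.coprod_comp_inl_inr]
  exact hf.hasFDerivAt

theorem fderiv_comp_fderiv_eq_neg_of_eventuallyEq_const {f : E → G → H} {γ : E → G} {x : E} {c : H}
    (hf : DifferentiableAt 𝕜 (uncurry f) (x, γ x)) (hγ : DifferentiableAt 𝕜 γ x)
    (h : (fun z ↦ f z (γ z)) =ᶠ[𝓝 x] fun _ ↦ c) :
    fderiv 𝕜 (f x) (γ x) ∘L fderiv 𝕜 γ x = -fderiv 𝕜 (f · (γ x)) x := by
  have hchain : HasFDerivAt (fun z ↦ f z (γ z))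
      (fderiv 𝕜 (f · (γ x)) x + fderiv 𝕜 (f x) (γ x) ∘L fderiv 𝕜 γ x) x := by
    have hgraph : HasFDerivAt (fun z ↦ (z, γ z)) (.prod (.id 𝕜 E) (fderiv 𝕜 γ x)) x :=
      (hasFDerivAt_id x).prodMk hγ.hasFDerivAt
    refine ((hasFDerivAt_uncurry_coprod_fderiv hf).comp x hgraph).congr_fderiv ?_
    ext
    simp
  have hconst : HasFDerivAt (fun z ↦ f z (γ z)) (0 : E →L[𝕜] H) x :=
    (hasFDerivAt_const c x).congr_of_eventuallyEq h
  exact eq_neg_of_add_eq_zero_right (hchain.unique hconst)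

theorem fderiv_comp_fderiv_eq_id_of_eventually_leftInverse {f : E → G} {g : G → E} {x : E}
    (hg : DifferentiableAt 𝕜 g (f x)) (hf : DifferentiableAt 𝕜 f x)
    (h : ∀ᶠ z in 𝓝 x, g (f z) = z) :
    fderiv 𝕜 g (f x) ∘L fderiv 𝕜 f x = .id 𝕜 E :=
  (fderiv_comp x hg hf).symm.trans ((EventuallyEq.fderiv_eq h).trans fderiv_id)

end Derivatives

section SelfAdjointScheme

variable {𝕜 H : Type*} [NontriviallyNormedField 𝕜] [NormedAddCommGroup H] [NormedSpace 𝕜 H]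
  {S : 𝕜 → H → H} {t : 𝕜} {u : H}

/-- The defect `∂₁S(t,u) - c (F(S(t,u)) + D₂S(t,u)(F(u)))` of a one-step scheme `S` for the equation
`u' = F(u)`, with the partial derivatives of `S` taken by `deriv` and `fderiv` (hence `0` where they
do not exist). The symmetrized defect of the paper is the case `c = 1/2`. -/
noncomputable def symmetrizedDefect (c : 𝕜) (F : H → H) (S : 𝕜 → H → H) (t : 𝕜) (u : H) : H :=
  deriv (S · u) t - c • (F (S t u) + fderiv 𝕜 (S t) u (F u))

theorem fderiv_deriv_eq_deriv_of_selfAdjoint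
    (hS : DifferentiableAt 𝕜 (uncurry S) (-t, S t u)) (ht : DifferentiableAt 𝕜 (S · u) t)
    (hsym : ∀ᶠ τ in 𝓝 t, S (-τ) (S τ u) = u) :
    fderiv 𝕜 (S (-t)) (S t u) (deriv (S · u) t) = deriv (S · (S t u)) (-t) := by
  have hγ : DifferentiableAt 𝕜 (fun τ ↦ S (-τ) u) (-t) :=
    differentiableAt_comp_neg.mpr ((neg_neg t).symm ▸ ht)
  have hsym' : (fun τ ↦ S τ (S (-τ) u)) =ᶠ[𝓝 (-t)] fun _ ↦ u := by
    have hneg : Tendsto (fun τ : 𝕜 ↦ -τ) (𝓝 (-t)) (𝓝 t) := by simpa using tendsto_neg (-t)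
    simpa [EventuallyEq] using hneg.eventually hsym
  have hγ' : deriv (fun τ ↦ S (-τ) u) (-t) = -deriv (S · u) t := by
    rw [deriv_comp_neg (S · u), neg_neg]
  have himplicit :=
    fderiv_comp_fderiv_eq_neg_of_eventuallyEq_const (by simpa using hS) hγ hsym'
  simpa [hγ'] using DFunLike.congr_fun himplicit 1

theorem critical_term_vanishes_general (c : 𝕜) (F : H → H)
    (hS : DifferentiableAt 𝕜 (uncurry S) (-t, S t u)) (ht : DifferentiableAt 𝕜 (S · u) t)
    (hu : DifferentiableAt 𝕜 (S t) u) (hsym : ∀ᶠ p in 𝓝 (t, u), S (-p.1) (S p.1 p.2) = p.2) :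
    fderiv 𝕜 (S (-t)) (S t u) (symmetrizedDefect c F S t u) -
      symmetrizedDefect c F S (-t) (S t u) = 0 := by
  have htime : fderiv 𝕜 (S (-t)) (S t u) (deriv (S · u) t) = deriv (S · (S t u)) (-t) :=
    fderiv_deriv_eq_deriv_of_selfAdjoint hS ht (hsym.curry_nhds.mono fun _ h ↦ h.self_of_nhds)
  have hspace : fderiv 𝕜 (S (-t)) (S t u) ∘L fderiv 𝕜 (S t) u = .id 𝕜 H :=
    fderiv_comp_fderiv_eq_id_of_eventually_leftInverse
      (hS.comp (S t u) (hasFDerivAt_prodMk_right (-t) (S t u)).differentiableAt) hu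
      hsym.curry_nhds.self_of_nhds
  have hspaceF : fderiv 𝕜 (S (-t)) (S t u) (fderiv 𝕜 (S t) u (F u)) = F u :=
    DFunLike.congr_fun hspace (F u)
  have hback : S (-t) (S t u) = u := hsym.self_of_nhds
  simp only [symmetrizedDefect, map_sub, map_smul, map_add, htime, hspaceF, hback]
  rw [add_comm (F u), sub_self]

end SelfAdjointScheme

/-- For a self-adjoint scheme `S`, the critical term built from the symmetrized defect
`Ds(t,u) = ∂₁S(t,u) - (1/2)(F(S(t,u)) + D₂S(t,u)(F(u)))` vanishes exactly:
`D₂S(-t,S(t,u₀))(Ds(t,u₀)) - Ds(-t,S(t,u₀)) = 0`. -/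
theorem critical_term_vanishes
    {H : Type*} [NormedAddCommGroup H] [NormedSpace ℝ H]
    (F : H → H)
    (S : ℝ → H → H) (S₁ : ℝ → H → H) (DS : ℝ → H → (H →L[ℝ] H))
    (hS : Differentiable ℝ (fun q : ℝ × H => S q.1 q.2))
    (hS₁ : ∀ t u, HasDerivAt (fun τ => S τ u) (S₁ t u) t)
    (hDS : ∀ t u, HasFDerivAt (S t) (DS t u) u)
    (hsym : ∀ t u, S (-t) (S t u) = u)
    (Ds : ℝ → H → H)
    (hDs : ∀ t u, Ds t u = S₁ t u - (1/2 : ℝ) • (F (S t u) + DS t u (F u)))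
    (t : ℝ) (u₀ : H) :
    DS (-t) (S t u₀) (Ds t u₀) - Ds (-t) (S t u₀) = 0 := by
  have hdefect : Ds = symmetrizedDefect (1 / 2 : ℝ) F S := by
    ext t u
    rw [hDs, symmetrizedDefect, (hS₁ t u).deriv, (hDS t u).fderiv]
  rw [hdefect, ← (hDS (-t) (S t u₀)).fderiv]
  exact critical_term_vanishes_general (1 / 2) F (hS (-t, S t u₀)) (hS₁ t u₀).differentiableAt
    (hDS t u₀).differentiableAt (.of_forall fun p ↦ hsym p.1 p.2)
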